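/- Let S be the unilateral shift on ℓ²(ℕ) and S* its adjoint. The spectrum of the bounded self-adjoint operator S + S* on the complex Hilbert space ℓ²(ℕ) equals the closed real interval [−2, 2], viewed as a subset of ℂ; that is, spectrum ℂ (S + S*) is the image of the interval Icc (−2) 2 under the inclusion ℝ → ℂ. -/

import Mathlib

/-!
The operator `T = S + S*` is self-adjoint, so its spectrum is real, and `S* S = 1` makes `S` an
isometry, so `‖T‖ ≤ 2`; hence the spectrum lies in `[-2, 2]`.

Conversely, let `t ∈ [-2, 2]` and suppose `T - t` is invertible. Solve `(T - t) ξ = e₀` and put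
`x n = Re (ξ n)`. Then `x 1 = t x 0 + 1`, `x (n + 2) = t x (n + 1) - x n` and `x n → 0`. The
quadratic form `x (n + 1) ^ 2 - t x n x (n + 1) + x n ^ 2` is constant in `n`, so it vanishes, and
`|t| ≤ 2` then forces `|x (n + 1)| = |x n|`. Being constant in absolute value and tending to `0`,
`x` is zero, against `x 1 = t x 0 + 1`. This treats the endpoints `±2` and the interior uniformly.
-/

/-- The real parts of the coordinates of a solution of `(S + S* - t) ξ = e₀` form such a null
sequence `x`, so `e₀` is not in the range of `S + S* - t` for real `t ∈ [-2, 2]`. -/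
theorem no_null_solution (t : ℝ) (ht : |t| ≤ 2) (x : ℕ → ℝ) (h1 : x 1 = t * x 0 + 1)
    (hrec : ∀ n, x (n + 2) = t * x (n + 1) - x n)
    (hx : Filter.Tendsto x Filter.atTop (nhds 0)) : False := by
  have hconst : ∀ n, x (n + 1) ^ 2 - t * x n * x (n + 1) + x n ^ 2
      = x 1 ^ 2 - t * x 0 * x 1 + x 0 ^ 2 := by
    intro n
    induction n with
    | zero => simp
    | succ k ih => rw [← ih, hrec k]; ring
  have hlim : Filter.Tendsto (fun n => x (n + 1) ^ 2 - t * x n * x (n + 1) + x n ^ 2)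
      Filter.atTop (nhds 0) := by
    have hx' := hx.comp (Filter.tendsto_add_atTop_nat 1)
    simpa using ((hx'.pow 2).sub ((hx.const_mul t).mul hx')).add (hx.pow 2)
  simp only [hconst] at hlim
  have hzero := tendsto_nhds_unique tendsto_const_nhds hlim
  have habs : ∀ n, |x (n + 1)| = |x n| := by
    intro n
    have h := (hconst n).trans hzero
    have hb : t * x n * x (n + 1) ≤ 2 * (|x n| * |x (n + 1)|) := by
      refine (le_abs_self _).trans ?_
      rw [abs_mul, abs_mul, mul_assoc]
      gcongr
    have hsq : (|x (n + 1)| - |x n|) ^ 2 ≤ 0 := by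
      nlinarith [sq_abs (x n), sq_abs (x (n + 1))]
    exact sub_eq_zero.1 (pow_eq_zero_iff two_ne_zero |>.1 (le_antisymm hsq (sq_nonneg _)))
  have habs0 : ∀ n, |x n| = |x 0| := by
    intro n
    induction n with
    | zero => rfl
    | succ k ih => rw [habs, ih]
  have habslim := hx.abs
  simp only [habs0, abs_zero] at habslim
  have h0 : |x 0| = 0 := tendsto_nhds_unique tendsto_const_nhds habslim
  have hx0 : x 0 = 0 := abs_eq_zero.1 h0
  have hx1 : x 1 = 0 := abs_eq_zero.1 ((habs0 1).trans h0)
  rw [hx0, hx1] at h1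
  norm_num at h1

theorem lp_two_tendsto_zero (ξ : lp (fun _ : ℕ => ℂ) 2) :
    Filter.Tendsto (fun n => ξ n) Filter.atTop (nhds 0) := by
  have h := (lp.memℓp ξ).summable (by norm_num)
  have h2 := h.tendsto_atTop_zero
  rw [tendsto_zero_iff_norm_tendsto_zero]
  have h3 := h2.sqrt
  simpa using h3

theorem adjoint_shift_apply
    (S : lp (fun _ : ℕ => ℂ) 2 →L[ℂ] lp (fun _ : ℕ => ℂ) 2)
    (hS0 : ∀ ξ : lp (fun _ : ℕ => ℂ) 2, S ξ 0 = 0)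
    (hS : ∀ (ξ : lp (fun _ : ℕ => ℂ) 2) (n : ℕ), S ξ (n + 1) = ξ n)
    (ξ : lp (fun _ : ℕ => ℂ) 2) (n : ℕ) :
    ContinuousLinearMap.adjoint S ξ n = ξ (n + 1) := by
  have hse : S (lp.single 2 n (1 : ℂ)) = lp.single 2 (n + 1) (1 : ℂ) := by
    ext m
    cases m with
    | zero => rw [hS0]; simp [lp.single_apply]
    | succ k => rw [hS]; simp [lp.single_apply, Pi.single_apply]
  have h := ContinuousLinearMap.adjoint_inner_right S (lp.single 2 n (1 : ℂ)) ξ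
  rw [hse, lp.inner_single_left, lp.inner_single_left] at h
  simpa using h

/-- The spectrum of `S + S*` on `ℓ²(ℕ)` is the interval `[-2, 2] ⊆ ℝ ⊆ ℂ`. -/
theorem spectrum_shift_plus_adjoint_eq_Icc
    (S : lp (fun _ : ℕ => ℂ) 2 →L[ℂ] lp (fun _ : ℕ => ℂ) 2)
    (hS0 : ∀ ξ : lp (fun _ : ℕ => ℂ) 2, S ξ 0 = 0)
    (hS : ∀ (ξ : lp (fun _ : ℕ => ℂ) 2) (n : ℕ), S ξ (n + 1) = ξ n) :
    spectrum ℂ (S + ContinuousLinearMap.adjoint S)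
      = (fun x : ℝ => (x : ℂ)) '' Set.Icc (-2 : ℝ) 2 := by
  have hadj := adjoint_shift_apply S hS0 hS
  apply Set.Subset.antisymm
  · intro z hz
    have hsa : IsSelfAdjoint (S + ContinuousLinearMap.adjoint S) :=
      IsSelfAdjoint.add_star_self S
    have hre := hsa.mem_spectrum_eq_re hz
    have hiso : Isometry S := by
      rw [ContinuousLinearMap.isometry_iff_adjoint_comp_self]
      ext ξ n
      simp [hadj, hS]
    have hS1 : ‖S‖ ≤ 1 := S.opNorm_le_bound zero_le_one fun ξ => by
      rw [one_mul, (AddMonoidHomClass.isometry_iff_norm S).1 hiso ξ]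
    have hnorm : ‖S + ContinuousLinearMap.adjoint S‖ ≤ 2 := by
      have h := norm_add_le S (ContinuousLinearMap.adjoint S)
      rw [LinearIsometryEquiv.norm_map] at h
      linarith
    have hnorm' : ‖S + ContinuousLinearMap.adjoint S‖
        * ‖(1 : lp (fun _ : ℕ => ℂ) 2 →L[ℂ] lp (fun _ : ℕ => ℂ) 2)‖ ≤ 2 :=
      (mul_le_of_le_one_right (norm_nonneg _) ContinuousLinearMap.norm_id_le).trans hnorm
    have hz2 : |z.re| ≤ 2 :=
      (Complex.abs_re_le_norm z).trans ((spectrum.norm_le_norm_mul_of_mem hz).trans hnorm')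
    exact ⟨z.re, abs_le.1 hz2, hre.symm⟩
  · rintro _ ⟨t, ht, rfl⟩
    rw [spectrum.mem_iff]
    intro hu
    obtain ⟨v, hv⟩ := hu.exists_right_inv
    -- `v` inverts `t - T`, so the sign of `e₀` is flipped to solve `(T - t) ξ = e₀`.
    set ξ := v (-lp.single 2 0 (1 : ℂ)) with hξ
    have hsolve : (t : ℂ) • ξ - (S ξ + ContinuousLinearMap.adjoint S ξ)
        = -lp.single 2 0 (1 : ℂ) := by
      have h := congrArg (fun A : lp (fun _ : ℕ => ℂ) 2 →L[ℂ] lp (fun _ : ℕ => ℂ) 2 =>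
        A (-lp.single 2 0 (1 : ℂ))) hv
      simpa [Algebra.algebraMap_eq_smul_one, ← hξ, -Complex.coe_smul] using h
    have hcoord : ∀ n, (t : ℂ) * ξ n - (S ξ n + ξ (n + 1))
        = -lp.single (E := fun _ : ℕ => ℂ) 2 0 (1 : ℂ) n := by
      intro n
      rw [← hadj]
      exact congrArg (fun η : lp (fun _ : ℕ => ℂ) 2 => η n) hsolve
    refine no_null_solution t (abs_le.2 ht) (fun n => (ξ n).re) ?_ ?_ ?_
    · have h := congrArg Complex.re (hcoord 0)
      simp [hS0] at h
      simp only
      linarith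
    · intro n
      have h := congrArg Complex.re (hcoord (n + 1))
      simp [hS, lp.single_apply] at h
      simp only
      linarith
    · simpa [Function.comp_def] using (Complex.continuous_re.tendsto 0).comp (lp_two_tendsto_zero ξ)
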